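/- Let (F₁,F₂) be a nonsingular pair of quadratic forms in s variables with integer coefficients. For every ε > 0 there is a constant C = C(ε, F₁, F₂) such that for all q ∈ ℕ and all u ∈ ℤ^s: |D_q(u)| ≤ C q^{s/2 + 2 + ε}. -/

import Mathlib

open MeasureTheory Real Matrix Finset

noncomputable section

/-- `e(x) = exp(2πix)`. -/
def e2pi (x : ℝ) : ℂ := Complex.exp (2 * Real.pi * Complex.I * x)

/-- Euclidean norm on `ℝ²`. -/
def nrm2 (x : ℝ × ℝ) : ℝ := Real.sqrt (x.1 ^ 2 + x.2 ^ 2)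

/-- Dot product on `ℝ²`. -/
def dot2 (x y : ℝ × ℝ) : ℝ := x.1 * y.1 + x.2 * y.2

/-- `x^⊥ = (x₂, -x₁)`. -/
def perp2 (x : ℝ × ℝ) : ℝ × ℝ := (x.2, -x.1)

/-- `δ_n` for `n ∈ ℤ²`. -/
def deltaInt (n : ℤ × ℤ) : ℂ := if n = 0 then 1 else 0

/-- `h(y,z) = Σ_{j ≥ 1} (1/(yj)) (ω(yj) − ω(|z|/(yj)))`. -/
def hFun (ω : ℝ → ℝ) (y z : ℝ) : ℝ :=
  ∑' j : ℕ+, (1 / (y * ((j : ℕ) : ℝ))) *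
    (ω (y * ((j : ℕ) : ℝ)) - ω (|z| / (y * ((j : ℕ) : ℝ))))

/-- `c = (∫_{ℝ²} ω(|x|) dx)⁻¹`. -/
def cConst (ω : ℝ → ℝ) : ℝ := (∫ x : ℝ × ℝ, ω (nrm2 x))⁻¹

/-- The function `p_{1,q}`. -/
def p1 (ω ω₀ : ℝ → ℝ) (Q : ℝ) (q : ℕ) (w : ℝ × ℝ) : ℂ :=
  -(cConst ω / Q : ℝ) * ∫ x : ℝ × ℝ,
    (((ω₀ (nrm2 x / Q ^ ((3 : ℝ) / 2)) *
      ∑' j : ℕ+, (1 / ((q : ℝ) * ((j : ℕ) : ℝ)) ^ 2) *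
        ω (nrm2 x / (((j : ℕ) : ℝ) * (q : ℝ) * Q ^ ((1 : ℝ) / 2)))) : ℝ) : ℂ) *
      e2pi (-(dot2 w x))

/-- The function `p_{2,r,k,q}` (with `q` allowed to be a real parameter). -/
def p2 (ω ω₀ : ℝ → ℝ) (Q : ℝ) (r : ℤ × ℤ) (k : ℕ) (q : ℝ) (w : ℝ × ℝ) : ℂ :=
  ((cConst ω / Q ^ 3 : ℝ) : ℂ) * ∫ x : ℝ × ℝ,
    (((ω₀ (nrm2 x / Q ^ ((3 : ℝ) / 2)) *
      hFun ω ((k : ℝ) * q / Q) (((r.1 : ℝ) * x.1 + (r.2 : ℝ) * x.2) / Q ^ 2)) : ℝ) : ℂ) *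
      e2pi (-(dot2 w x))

/-- The lattice `Λ(a,q) = {k a + q y}` as a subset of `ℤ²`. -/
def Lambda (a : ℤ × ℤ) (q : ℕ) : Set (ℤ × ℤ) :=
  {v | ∃ k : ℤ, ∃ y : ℤ × ℤ, v = (k * a.1 + (q : ℤ) * y.1, k * a.2 + (q : ℤ) * y.2)}

/-- `k(r) = gcd(r₁,r₂)/gcd(gcd(r₁,r₂),q)`. -/
def kOf (r : ℤ × ℤ) (q : ℕ) : ℕ := Int.gcd r.1 r.2 / Nat.gcd (Int.gcd r.1 r.2) q

/-- The function `p_{Λ(a,q)}`. -/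
def pLambda (ω ω₀ : ℝ → ℝ) (Q : ℝ) (q : ℕ) (a : ℤ × ℤ) (w : ℝ × ℝ) : ℂ :=
  p1 ω ω₀ Q q w +
    ∑' r : ℤ × ℤ,
      Set.indicator {r : ℤ × ℤ | r ∈ Lambda a q ∧ r ≠ 0}
        (fun r => ((ω (nrm2 ((r.1 : ℝ), (r.2 : ℝ)) / Q ^ ((1 : ℝ) / 2)) : ℝ) : ℂ) *
          p2 ω ω₀ Q r (kOf r q) (q : ℝ) w) r

/-- Reduced residues `a mod q` (canonical representatives) with `gcd(a₁,a₂,q)=1`. -/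
def residues (q : ℕ) : Finset (ℕ × ℕ) :=
  ((Finset.range q) ×ˢ (Finset.range q)).filter (fun a => Nat.gcd (Nat.gcd a.1 a.2) q = 1)

/-- Normalized directional derivative along `ξ`. -/
def dirDeriv (ξ : ℝ × ℝ) (f : ℝ × ℝ → ℂ) : ℝ × ℝ → ℂ :=
  fun w => fderiv ℝ f w (ξ.1 / nrm2 ξ, ξ.2 / nrm2 ξ)

/-- Fourier transform `ω̂₀(t) = ∫ ω₀(x) e(−xt) dx`. -/
def fourierW0 (ω₀ : ℝ → ℝ) (t : ℝ) : ℂ := ∫ x : ℝ, ((ω₀ x : ℝ) : ℂ) * e2pi (-(x * t))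

/-- `|M(w)x|` for the 3×2 matrix `M(w)`. -/
def Mnorm (Q : ℝ) (w : ℝ × ℝ) (x : ℝ × ℝ) : ℝ :=
  Real.sqrt (x.1 ^ 2 / Q + x.2 ^ 2 / Q + Q ^ 2 * (w.1 * x.2 - w.2 * x.1) ^ 2)

/-- `μ_{M(w)}(Λ(a,q))`: infimum of `|M(w)x|` over nonzero lattice points. -/
def muM (Q : ℝ) (w : ℝ × ℝ) (a : ℤ × ℤ) (q : ℕ) : ℝ :=
  sInf {t : ℝ | ∃ v : ℤ × ℤ, v ∈ Lambda a q ∧ v ≠ 0 ∧ t = Mnorm Q w ((v.1 : ℝ), (v.2 : ℝ))}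

/-- Quadratic form attached to an integer matrix, over any commutative ring. -/
def quadEval {s : ℕ} {R : Type*} [CommRing R] (M : Matrix (Fin s) (Fin s) ℤ)
    (x : Fin s → R) : R :=
  ∑ i, ∑ j, (M i j : R) * x i * x j

/-- `e_q(n) = exp(2πin/q)` for an integer `n`. -/
def eqc (q : ℕ) (n : ℤ) : ℂ := e2pi ((n : ℝ) / (q : ℝ))

/-- The exponential sum `D_q(u)`. -/
def Dq (s : ℕ) (M₁ M₂ : Matrix (Fin s) (Fin s) ℤ) (q : ℕ) (u : Fin s → ℤ) : ℂ :=
  ∑ a ∈ residues q, ∑ b ∈ Fintype.piFinset (fun _ : Fin s => Finset.range q),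
    eqc q ((a.1 : ℤ) * quadEval M₁ (fun i => (b i : ℤ)) +
      (a.2 : ℤ) * quadEval M₂ (fun i => (b i : ℤ)) + ∑ i, (b i : ℤ) * u i)

/-- The exponential sum `S_{q,dc}(u)`. -/
def Sq (s : ℕ) (M₁ M₂ : Matrix (Fin s) (Fin s) ℤ) (q d : ℕ) (c : ℤ × ℤ)
    (u : Fin s → ℤ) : ℂ :=
  ∑ a ∈ (residues q).filter
      (fun a => (q : ℤ) ∣ (d : ℤ) * (c.1 * (a.2 : ℤ) - c.2 * (a.1 : ℤ))),
    ∑ b ∈ Fintype.piFinset (fun _ : Fin s => Finset.range q),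
      eqc q ((a.1 : ℤ) * quadEval M₁ (fun i => (b i : ℤ)) +
        (a.2 : ℤ) * quadEval M₂ (fun i => (b i : ℤ)) + ∑ i, (b i : ℤ) * u i)

/-- The pair of quadratic forms given by `M₁, M₂` is nonsingular: at every nonzero
complex common zero the gradients (equivalently `M₁x`, `M₂x`) are linearly independent. -/
def NonsingularPair (s : ℕ) (M₁ M₂ : Matrix (Fin s) (Fin s) ℤ) : Prop :=
  ∀ x : Fin s → ℂ, x ≠ 0 →
    quadEval M₁ x = 0 → quadEval M₂ x = 0 →
    LinearIndependent ℂ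
      ![(M₁.map (fun z : ℤ => (z : ℂ))).mulVec x, (M₂.map (fun z : ℤ => (z : ℂ))).mulVec x]

/-- Euclidean norm on `Fin m → ℝ`. -/
def enorm' {m : ℕ} (v : Fin m → ℝ) : ℝ := Real.sqrt (∑ i, v i ^ 2)

end

open scoped Polynomial Matrix

/-- The determinant of the pencil `X * A + B`, as a polynomial. -/
noncomputable def pencilDet {n R : Type*} [Fintype n] [DecidableEq n] [CommRing R]
    (A B : Matrix n n R) : R[X] :=
  (Polynomial.X (R := R) • A.map Polynomial.C + B.map Polynomial.C).det

theorem derivative_det_eq_sum_mul_adjugate {n R : Type*} [Fintype n] [DecidableEq n] [CommRing R]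
    (M : Matrix n n R[X]) :
    Polynomial.derivative M.det =
      ∑ i, ∑ k, Polynomial.derivative (M k i) * M.adjugate i k := by
  have h : ∀ i, ∑ k, Polynomial.derivative (M k i) * M.adjugate i k =
      (M.updateCol i (fun k => Polynomial.derivative (M k i))).det := by
    intro i
    rw [← Matrix.cramer_apply, Matrix.cramer_eq_adjugate_mulVec]
    simp [Matrix.mulVec, dotProduct, mul_comm]
  simp_rw [h, Matrix.det_apply]
  rw [Finset.sum_comm, Polynomial.derivative_sum]
  refine Finset.sum_congr rfl fun σ _ => ?_
  rw [← Finset.smul_sum, Units.smul_def, Units.smul_def, map_zsmul,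
    Polynomial.derivative_prod_finset]
  congr 1
  refine Finset.sum_congr rfl fun i _ => ?_
  rw [← Finset.prod_erase_mul _ _ (Finset.mem_univ i)]
  congr 1
  · refine Finset.prod_congr rfl fun j hj => ?_
    rw [Matrix.updateCol_ne (Finset.ne_of_mem_erase hj)]
  · simp

theorem eval_pencilDet {n R : Type*} [Fintype n] [DecidableEq n] [CommRing R]
    (A B : Matrix n n R) (t : R) : (pencilDet A B).eval t = (t • A + B).det := by
  rw [pencilDet, ← Polynomial.coe_evalRingHom, RingHom.map_det]
  congr 1
  ext i j
  simp
  ring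

theorem eval_derivative_pencilDet {n R : Type*} [Fintype n] [DecidableEq n] [CommRing R]
    (A B : Matrix n n R) (t : R) :
    (Polynomial.derivative (pencilDet A B)).eval t =
      ∑ i, ∑ k, A k i * (t • A + B).adjugate i k := by
  have hadj : ∀ i k, Polynomial.evalRingHom t
      ((Polynomial.X (R := R) • A.map Polynomial.C + B.map Polynomial.C).adjugate i k) =
      (t • A + B).adjugate i k := by
    intro i k
    have := congrFun (congrFun ((Polynomial.evalRingHom t).map_adjugate
      (Polynomial.X (R := R) • A.map Polynomial.C + B.map Polynomial.C)) i) k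
    rw [RingHom.mapMatrix_apply, Matrix.map_apply] at this
    rw [this]
    congr 2
    ext i j
    simp
    ring
  rw [pencilDet, derivative_det_eq_sum_mul_adjugate, ← Polynomial.coe_evalRingHom]
  simp only [map_sum, map_mul, hadj]
  simp

theorem map_pencilDet {n R S : Type*} [Fintype n] [DecidableEq n] [CommRing R] [CommRing S]
    (f : R →+* S) (A B : Matrix n n R) :
    (pencilDet A B).map f = pencilDet (A.map f) (B.map f) := by
  rw [pencilDet, pencilDet, ← Polynomial.coe_mapRingHom, RingHom.map_det]
  congr 1
  ext i j
  simp

theorem exists_isotropic_in_span {s : ℕ} (A : Matrix (Fin s) (Fin s) ℂ) (v w : Fin s → ℂ) :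
    ∃ x y : ℂ, (x ≠ 0 ∨ y ≠ 0) ∧ (x • v + y • w) ⬝ᵥ (A *ᵥ (x • v + y • w)) = 0 := by
  by_cases hv : v ⬝ᵥ (A *ᵥ v) = 0
  · exact ⟨1, 0, by simp, by simpa using hv⟩
  · obtain ⟨r, hr⟩ := IsAlgClosed.exists_eq_mul_self
      (discrim (v ⬝ᵥ (A *ᵥ v)) (v ⬝ᵥ (A *ᵥ w) + w ⬝ᵥ (A *ᵥ v)) (w ⬝ᵥ (A *ᵥ w)))
    obtain ⟨x, hx⟩ := exists_quadratic_eq_zero hv ⟨r, hr⟩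
    refine ⟨x, 1, by simp, ?_⟩
    rw [← hx]
    simp only [one_smul, Matrix.mulVec_add, Matrix.mulVec_smul, dotProduct_add, add_dotProduct,
      smul_dotProduct, dotProduct_smul, smul_eq_mul]
    ring

/-- If the quadratic form of `A` is anisotropic on the kernel of the singular symmetric matrix
`N`, then the trace of `adjugate N * A` does not vanish. -/
theorem sum_mul_adjugate_ne_zero {s : ℕ} (N A : Matrix (Fin s) (Fin s) ℂ) (hN : N.IsSymm)
    (hdet : N.det = 0) (hA : ∀ z, z ≠ 0 → N *ᵥ z = 0 → z ⬝ᵥ (A *ᵥ z) ≠ 0) :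
    ∑ i, ∑ k, A k i * N.adjugate i k ≠ 0 := by
  obtain ⟨v, hv0, hv⟩ := Matrix.exists_mulVec_eq_zero_iff.2 hdet
  obtain ⟨j, hj⟩ := Function.ne_iff.1 hv0
  have hj : v j ≠ 0 := hj
  have huniq : ∀ x, N *ᵥ x = 0 → x j = 0 → x = 0 := by
    intro x hx hxj
    by_contra hx0
    obtain ⟨a, b, hab, h⟩ := exists_isotropic_in_span A v x
    refine hA (a • v + b • x) ?_ ?_ h
    · intro h0
      have ha : a = 0 := by
        have := congrFun h0 j
        simpa [hxj, hj] using this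
      have hb : b ≠ 0 := by simpa [ha] using hab
      rw [ha, zero_smul, zero_add, smul_eq_zero] at h0
      exact h0.elim hb hx0
    · simp [Matrix.mulVec_add, Matrix.mulVec_smul, hv, hx]
  have hker : ∀ x, N *ᵥ x = 0 → ∀ k, x k = x j / v j * v k := by
    intro x hx k
    have := huniq (x - (x j / v j) • v) (by simp [Matrix.mulVec_sub, Matrix.mulVec_smul, hv, hx])
      (by simp [hj])
    simpa [sub_eq_zero] using congrFun this k
  have hsymm : ∀ i k, N.adjugate i k = N.adjugate k i := fun i k => hN.adjugate.apply k i
  have hcol : ∀ l, N *ᵥ (fun k => N.adjugate k l) = 0 := by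
    intro l
    have := Matrix.mul_adjugate N
    rw [hdet, zero_smul] at this
    ext i
    exact congrFun (congrFun this i) l
  have hrank : ∀ k l, N.adjugate k l = N.adjugate j j / v j ^ 2 * (v k * v l) := by
    intro k l
    rw [hker _ (hcol l) k, hsymm j l, hker _ (hcol j) l]
    field_simp
  have hsum : ∑ i, ∑ k, A k i * N.adjugate i k =
      N.adjugate j j / v j ^ 2 * (v ⬝ᵥ (A *ᵥ v)) := by
    simp only [dotProduct, Matrix.mulVec, Finset.mul_sum]
    rw [Finset.sum_comm]
    refine Finset.sum_congr rfl fun k _ => Finset.sum_congr rfl fun i _ => ?_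
    rw [hrank]
    ring
  rw [hsum]
  refine mul_ne_zero (div_ne_zero ?_ (pow_ne_zero _ hj)) (hA v hv0 hv)
  intro hjj
  have hadj : ∀ i, N.adjugate j i = 0 := by
    intro i
    rw [hrank, hjj]
    simp
  have hsurj : ∀ i, ∃ y, N *ᵥ y = Pi.single i 1 := by
    intro i
    have h := hadj i
    rw [Matrix.adjugate_apply] at h
    obtain ⟨x, hx0, hx⟩ := Matrix.exists_mulVec_eq_zero_iff.2 h
    have hxj : x j = 0 := by
      have := congrFun hx i
      simpa [Matrix.mulVec, dotProduct, Pi.single_apply] using this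
    have hxi : ∀ k, k ≠ i → (N *ᵥ x) k = 0 := by
      intro k hk
      have := congrFun hx k
      simpa [Matrix.mulVec, Matrix.updateRow_ne hk] using this
    have hc : (N *ᵥ x) i ≠ 0 := by
      intro hc
      refine hx0 (huniq x ?_ hxj)
      ext k
      by_cases hk : k = i
      · rw [hk, hc]; rfl
      · exact hxi k hk
    refine ⟨((N *ᵥ x) i)⁻¹ • x, ?_⟩
    ext k
    rw [Matrix.mulVec_smul]
    by_cases hk : k = i
    · subst hk; simp [hc]
    · simp [hxi k hk, hk]
  choose y hy using hsurj
  have h1 : N * (Matrix.of fun k i => y i k) = 1 := by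
    ext k i
    have := congrFun (hy i) k
    simpa [Matrix.mul_apply, Matrix.mulVec, dotProduct, Matrix.one_apply, Pi.single_apply]
      using this
  have := congrArg Matrix.det h1
  simp [Matrix.det_mul, hdet] at this

theorem exists_bezout_of_isCoprime_map (f g : ℤ[X])
    (h : IsCoprime (f.map (Int.castRingHom ℂ)) (g.map (Int.castRingHom ℂ))) :
    ∃ Δ : ℤ, Δ ≠ 0 ∧ ∃ a b : ℤ[X], a * f + b * g = Polynomial.C Δ := by
  have hQ : IsCoprime (f.map (Int.castRingHom ℚ)) (g.map (Int.castRingHom ℚ)) := by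
    rw [← Polynomial.isCoprime_map (algebraMap ℚ ℂ), Polynomial.map_map, Polynomial.map_map,
      RingHom.eq_intCast' ((algebraMap ℚ ℂ).comp (Int.castRingHom ℚ))]
    exact h
  obtain ⟨a, b, hab⟩ := hQ
  obtain ⟨m, hm, ha⟩ := IsLocalization.integerNormalization_spec (nonZeroDivisors ℤ) a
  obtain ⟨n, hn, hb⟩ := IsLocalization.integerNormalization_spec (nonZeroDivisors ℤ) b
  set a' := IsLocalization.integerNormalization (nonZeroDivisors ℤ) a
  set b' := IsLocalization.integerNormalization (nonZeroDivisors ℤ) b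
  rw [algebraMap_int_eq] at ha hb
  refine ⟨m * n, mul_ne_zero (nonZeroDivisors.ne_zero hm) (nonZeroDivisors.ne_zero hn),
    Polynomial.C n * a', Polynomial.C m * b', ?_⟩
  apply Polynomial.map_injective (Int.castRingHom ℚ) Int.cast_injective
  simp only [Polynomial.map_add, Polynomial.map_mul, Polynomial.map_C, ha, hb, zsmul_eq_mul]
  have : (Polynomial.C ((Int.castRingHom ℚ) (m * n)) : ℚ[X]) = Polynomial.C ((m : ℚ) * n) * 1 := by
    simp
  rw [this, ← hab]
  simp
  ring

theorem isCoprime_pencilDet {s : ℕ} {M₁ M₂ : Matrix (Fin s) (Fin s) ℤ}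
    (hM₁ : M₁.IsSymm) (hM₂ : M₂.IsSymm) (hns : NonsingularPair s M₁ M₂) :
    IsCoprime ((pencilDet (2 • M₁) (2 • M₂)).map (Int.castRingHom ℂ))
      ((Polynomial.derivative (pencilDet (2 • M₁) (2 • M₂))).map (Int.castRingHom ℂ)) := by
  rw [← Polynomial.derivative_map, map_pencilDet]
  have hq : ∀ (M : Matrix (Fin s) (Fin s) ℤ) (x : Fin s → ℂ),
      quadEval M x = x ⬝ᵥ (M.map (fun z : ℤ => (z : ℂ)) *ᵥ x) := by
    intro M x
    simp only [quadEval, dotProduct, Matrix.mulVec, Finset.mul_sum, Matrix.map_apply]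
    exact Finset.sum_congr rfl fun i _ => Finset.sum_congr rfl fun j _ => by ring
  have hmap : ∀ M : Matrix (Fin s) (Fin s) ℤ, (2 • M).map (Int.castRingHom ℂ) =
      (2 : ℂ) • M.map (fun z : ℤ => (z : ℂ)) := by
    intro M
    ext i j
    simp [two_smul, two_mul]
  rw [hmap, hmap]
  set A := M₁.map (fun z : ℤ => (z : ℂ)) with hA
  set B := M₂.map (fun z : ℤ => (z : ℂ)) with hB
  have hAs : A.IsSymm := hM₁.map _
  have hBs : B.IsSymm := hM₂.map _
  rw [Polynomial.isCoprime_iff_aeval_ne_zero_of_isAlgClosed ℂ ℂ]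
  intro t
  rw [Polynomial.coe_aeval_eq_eval, or_iff_not_imp_left, not_not, eval_derivative_pencilDet,
    eval_pencilDet]
  intro hdet
  refine sum_mul_adjugate_ne_zero _ _ (((hAs.smul _).smul _).add (hBs.smul _)) hdet ?_
  intro z hz0 hz h0
  have hz' : t • (A *ᵥ z) + B *ᵥ z = 0 := by
    have : (2 : ℂ) • (t • (A *ᵥ z) + B *ᵥ z) = 0 := by
      rw [← hz]
      simp only [Matrix.add_mulVec, Matrix.smul_mulVec, smul_add, smul_comm t]
    exact (smul_eq_zero.1 this).resolve_left two_ne_zero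
  have h1 : z ⬝ᵥ (A *ᵥ z) = 0 := by
    simpa [Matrix.smul_mulVec] using h0
  have h2 : z ⬝ᵥ (B *ᵥ z) = 0 := by
    have := congrArg (fun y => z ⬝ᵥ y) hz'
    simpa [h1] using this
  have hli := hns z hz0 (by rw [hq, h1]) (by rw [hq, h2])
  rw [LinearIndependent.pair_iff] at hli
  have := hli t 1 (by rw [one_smul]; exact hz')
  exact one_ne_zero this.2

theorem exists_bezout_pencilDet {s : ℕ} {M₁ M₂ : Matrix (Fin s) (Fin s) ℤ}
    (hM₁ : M₁.IsSymm) (hM₂ : M₂.IsSymm) (hns : NonsingularPair s M₁ M₂) :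
    ∃ Δ : ℤ, Δ ≠ 0 ∧ ∃ a b : ℤ[X], a * pencilDet (2 • M₁) (2 • M₂) +
      b * Polynomial.derivative (pencilDet (2 • M₁) (2 • M₂)) = Polynomial.C Δ :=
  exists_bezout_of_isCoprime_map _ _ (isCoprime_pencilDet hM₁ hM₂ hns)

theorem NonsingularPair.symm {s : ℕ} {M₁ M₂ : Matrix (Fin s) (Fin s) ℤ}
    (hns : NonsingularPair s M₁ M₂) : NonsingularPair s M₂ M₁ := by
  intro x hx h2 h1
  have := LinearIndependent.pair_symm_iff.1 (hns x hx h1 h2)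
  exact this

theorem card_le_of_forall_mul_sub_eq_zero {q N : ℕ} [NeZero q] (hN : 0 < N)
    (S : Finset (ZMod q)) (h : ∀ t ∈ S, ∀ t₀ ∈ S, (N : ZMod q) * (t - t₀) = 0) :
    S.card ≤ N := by
  rcases S.eq_empty_or_nonempty with rfl | ⟨t₀, ht₀⟩
  · simp
  · refine le_trans ?_ (IsAddCyclic.card_nsmul_eq_zero_le (α := ZMod q) hN)
    refine Finset.card_le_card_of_injOn (fun t => t - t₀) (fun t ht => ?_)
      (fun a _ b _ hab => sub_left_injective hab)
    simpa [nsmul_eq_mul] using h t ht t₀ ht₀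

theorem natCast_pow_mul_eq_zero {p k v : ℕ} (hp : p.Prime) {m : ℤ} (hm : ¬ (p : ℤ) ^ (v + 1) ∣ m)
    {x : ZMod (p ^ k)} (hx : (m : ZMod (p ^ k)) * x = 0) : ((p ^ v : ℕ) : ZMod (p ^ k)) * x = 0 := by
  obtain ⟨x, rfl⟩ := ZMod.intCast_surjective x
  have hpi : Prime (p : ℤ) := Nat.prime_iff_prime_int.1 hp
  have hm0 : m ≠ 0 := by
    rintro rfl
    exact hm (dvd_zero _)
  obtain ⟨m', hm', hmm⟩ := (Int.finiteMultiplicity_iff.2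
    ⟨by simpa using hp.ne_one, hm0⟩ : FiniteMultiplicity (p : ℤ) m).exists_eq_pow_mul_and_not_dvd
  set a := multiplicity (p : ℤ) m
  have hav : a ≤ v := by
    by_contra! h
    exact hm (hm' ▸ dvd_mul_of_dvd_left (pow_dvd_pow _ h) _)
  rw [← Int.cast_mul, ZMod.intCast_zmod_eq_zero_iff_dvd] at hx
  rw [← Int.cast_natCast, ← Int.cast_mul, ZMod.intCast_zmod_eq_zero_iff_dvd]
  push_cast at hx ⊢
  rw [hm', mul_right_comm] at hx
  have hco : IsCoprime ((p : ℤ) ^ k) m' := (((hpi.coprime_iff_not_dvd).2 hmm)).pow_left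
  exact (hco.dvd_of_dvd_mul_right hx).trans (mul_dvd_mul_right (pow_dvd_pow _ hav) _)

theorem card_mul_eq_zero_le {p k v : ℕ} [Fact p.Prime] {m : ℤ} (hm : ¬ (p : ℤ) ^ (v + 1) ∣ m) :
    #{x : ZMod (p ^ k) | (m : ZMod (p ^ k)) * x = 0} ≤ p ^ v := by
  have hp : p.Prime := Fact.out
  refine card_le_of_forall_mul_sub_eq_zero (pow_pos hp.pos v) _ fun t ht t₀ ht₀ => ?_
  simp only [Finset.mem_filter, Finset.mem_univ, true_and] at ht ht₀
  exact natCast_pow_mul_eq_zero hp hm (by rw [mul_sub, ht, ht₀, sub_zero])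

theorem card_castHom_fiber_le {p j k : ℕ} [Fact p.Prime] (hjk : j ≤ k) (c : ZMod (p ^ j)) :
    #{t : ZMod (p ^ k) | ZMod.castHom (pow_dvd_pow p hjk) (ZMod (p ^ j)) t = c} ≤ p ^ (k - j) := by
  have hp : p.Prime := Fact.out
  refine card_le_of_forall_mul_sub_eq_zero (pow_pos hp.pos _) _ fun t ht t₀ ht₀ => ?_
  simp only [Finset.mem_filter, Finset.mem_univ, true_and] at ht ht₀
  have h : ZMod.castHom (pow_dvd_pow p hjk) (ZMod (p ^ j)) (t - t₀) = 0 := by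
    rw [map_sub, ht, ht₀, sub_self]
  obtain ⟨x, hx⟩ := ZMod.intCast_surjective (t - t₀)
  rw [← hx] at h ⊢
  rw [map_intCast, ZMod.intCast_zmod_eq_zero_iff_dvd] at h
  rw [← Int.cast_natCast, ← Int.cast_mul, ZMod.intCast_zmod_eq_zero_iff_dvd]
  obtain ⟨y, rfl⟩ := h
  refine ⟨y, ?_⟩
  push_cast
  rw [← mul_assoc, ← pow_add, Nat.sub_add_cancel hjk]

/-- A bound for the number of zeros modulo powers of `p` of a polynomial `f` such that `p ^ (v + 1)`
does not divide some integer in the ideal generated by `f` and its derivative. -/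
def zerosBound (p v : ℕ) (f : ℤ[X]) : ℕ := if v = 0 then f.natDegree + 1 else p ^ (2 * v + 1)

/-- The zeros of an integer polynomial modulo `q`. -/
noncomputable def zerosMod (f : ℤ[X]) (q : ℕ) [NeZero q] : Finset (ZMod q) :=
  {t | (f.map (Int.castRingHom (ZMod q))).eval t = 0}

theorem intCast_mem_zerosMod {f : ℤ[X]} {q : ℕ} [NeZero q] {x : ℤ} :
    (x : ZMod q) ∈ zerosMod f q ↔ (q : ℤ) ∣ f.eval x := by
  rw [zerosMod, Finset.mem_filter, Polynomial.eval_intCast_map, eq_intCast,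
    ZMod.intCast_zmod_eq_zero_iff_dvd]
  simp

theorem dvd_of_dvd_eval {f a b : ℤ[X]} {Δ d x : ℤ}
    (hab : a * f + b * Polynomial.derivative f = Polynomial.C Δ)
    (h₁ : d ∣ f.eval x) (h₂ : d ∣ (Polynomial.derivative f).eval x) : d ∣ Δ := by
  have := congrArg (Polynomial.eval x) hab
  rw [Polynomial.eval_add, Polynomial.eval_mul, Polynomial.eval_mul, Polynomial.eval_C] at this
  rw [← this]
  exact dvd_add (dvd_mul_of_dvd_right h₁ _) (dvd_mul_of_dvd_right h₂ _)

theorem card_zerosMod_prime_le {f a b : ℤ[X]} {Δ : ℤ} {p : ℕ} [Fact p.Prime]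
    (hab : a * f + b * Polynomial.derivative f = Polynomial.C Δ) (hΔ : ¬ (p : ℤ) ∣ Δ) :
    (zerosMod f p).card ≤ f.natDegree := by
  have h0 : f.map (Int.castRingHom (ZMod p)) ≠ 0 := by
    intro h0
    have := congrArg (Polynomial.map (Int.castRingHom (ZMod p))) hab
    rw [Polynomial.map_add, Polynomial.map_mul, Polynomial.map_mul, ← Polynomial.derivative_map,
      h0, Polynomial.map_C, eq_intCast (Int.castRingHom (ZMod p))] at this
    simp only [mul_zero, Polynomial.derivative_zero, add_zero] at this
    rw [eq_comm, Polynomial.C_eq_zero, ZMod.intCast_zmod_eq_zero_iff_dvd] at this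
    exact hΔ this
  have hsub : zerosMod f p ⊆ (f.map (Int.castRingHom (ZMod p))).roots.toFinset := by
    intro t ht
    rw [zerosMod, Finset.mem_filter] at ht
    rw [Multiset.mem_toFinset, Polynomial.mem_roots h0]
    exact ht.2
  exact (Finset.card_le_card hsub).trans ((Multiset.toFinset_card_le _).trans
    ((Polynomial.card_roots' _).trans Polynomial.natDegree_map_le))

theorem card_zerosMod_prime_pow_le {f a b : ℤ[X]} {Δ : ℤ} {p v : ℕ} [Fact p.Prime]
    (hab : a * f + b * Polynomial.derivative f = Polynomial.C Δ)
    (hΔ : ¬ (p : ℤ) ^ (v + 1) ∣ Δ) (n : ℕ) :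
    (zerosMod f (p ^ n)).card ≤ zerosBound p v f := by
  have hp : p.Prime := Fact.out
  rcases le_or_gt n v with hn | hn
  · have h1 : (zerosMod f (p ^ n)).card ≤ p ^ n := by
      simpa [ZMod.card] using Finset.card_le_univ (zerosMod f (p ^ n))
    refine h1.trans ?_
    rw [zerosBound]
    split_ifs with hv
    · have : n = 0 := by omega
      subst this
      simp
    · exact Nat.pow_le_pow_right hp.pos (by omega)
  · set φ := ZMod.castHom (pow_dvd_pow p hn) (ZMod (p ^ (v + 1)))
    have hfib : (zerosMod f (p ^ n)).card ≤ p ^ v * ((zerosMod f (p ^ n)).image φ).card := by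
      refine Finset.card_le_mul_card_image _ _ fun c _ => ?_
      refine card_le_of_forall_mul_sub_eq_zero (pow_pos hp.pos v) _ fun t ht t₀ ht₀ => ?_
      obtain ⟨x, rfl⟩ := ZMod.intCast_surjective t
      obtain ⟨y, rfl⟩ := ZMod.intCast_surjective t₀
      rw [Finset.mem_filter, intCast_mem_zerosMod, map_intCast] at ht ht₀
      obtain ⟨hx, hxc⟩ := ht
      obtain ⟨hy, hyc⟩ := ht₀
      have hxy : (p : ℤ) ^ (v + 1) ∣ x - y := by
        have : ((x - y : ℤ) : ZMod (p ^ (v + 1))) = 0 := by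
          rw [Int.cast_sub, hxc, hyc, sub_self]
        rw [ZMod.intCast_zmod_eq_zero_iff_dvd] at this
        exact_mod_cast this
      obtain ⟨r, hr⟩ := Polynomial.binomExpansion f y (x - y)
      rw [add_sub_cancel] at hr
      have hpn : (p : ℤ) ^ (v + 1) ∣ ((p ^ n : ℕ) : ℤ) := by
        push_cast
        exact pow_dvd_pow _ hn
      have hm : ¬ (p : ℤ) ^ (v + 1) ∣ (Polynomial.derivative f).eval y + r * (x - y) := by
        intro h
        refine hΔ (dvd_of_dvd_eval hab (hpn.trans hy) ?_)
        exact (dvd_add_left (dvd_mul_of_dvd_right hxy r)).1 h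
      rw [← Int.cast_sub]
      refine natCast_pow_mul_eq_zero hp hm ?_
      rw [← Int.cast_mul, ZMod.intCast_zmod_eq_zero_iff_dvd]
      have : ((Polynomial.derivative f).eval y + r * (x - y)) * (x - y) =
          f.eval x - f.eval y := by
        rw [hr]
        ring
      rw [this]
      exact dvd_sub hx hy
    refine hfib.trans ?_
    rw [zerosBound]
    split_ifs with hv
    · subst hv
      have : Fact (p ^ (0 + 1)).Prime := ⟨by simpa using hp⟩
      have hsub : (zerosMod f (p ^ n)).image φ ⊆ zerosMod f (p ^ (0 + 1)) := by
        intro c hc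
        obtain ⟨t, ht, rfl⟩ := Finset.mem_image.1 hc
        obtain ⟨x, rfl⟩ := ZMod.intCast_surjective t
        rw [intCast_mem_zerosMod] at ht
        rw [map_intCast, intCast_mem_zerosMod]
        exact (Int.natCast_dvd_natCast.2 (pow_dvd_pow p hn)).trans ht
      have := (Finset.card_le_card hsub).trans
        (card_zerosMod_prime_le hab (by simpa using hΔ))
      simp only [pow_zero, one_mul]
      omega
    · have : ((zerosMod f (p ^ n)).image φ).card ≤ p ^ (v + 1) := by
        simpa [ZMod.card] using Finset.card_le_univ ((zerosMod f (p ^ n)).image φ)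
      calc p ^ v * _ ≤ p ^ v * p ^ (v + 1) := by gcongr
        _ = p ^ (2 * v + 1) := by rw [← pow_add]; congr 1; ring

theorem card_dvd_eval_le {f a b : ℤ[X]} {Δ : ℤ} {p v : ℕ} [Fact p.Prime]
    (hab : a * f + b * Polynomial.derivative f = Polynomial.C Δ)
    (hΔ : ¬ (p : ℤ) ^ (v + 1) ∣ Δ) {j k : ℕ} (hjk : j ≤ k) :
    #{t : ZMod (p ^ k) | ZMod.castHom (pow_dvd_pow p hjk) (ZMod (p ^ j)) t ∈ zerosMod f (p ^ j)} ≤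
      p ^ (k - j) * zerosBound p v f := by
  refine (Finset.card_le_mul_card_image
    (f := ZMod.castHom (pow_dvd_pow p hjk) (ZMod (p ^ j))) _ (p ^ (k - j)) fun c _ => ?_).trans ?_
  · refine le_trans (Finset.card_le_card ?_) (card_castHom_fiber_le hjk c)
    exact Finset.filter_subset_filter _ (Finset.subset_univ _)
  · refine Nat.mul_le_mul_left _ (le_trans (Finset.card_le_card ?_)
      (card_zerosMod_prime_pow_le hab hΔ j))
    intro c hc
    obtain ⟨t, ht, rfl⟩ := Finset.mem_image.1 hc
    exact (Finset.mem_filter.1 ht).2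

theorem card_eval_mul_eq_zero_le {f a b : ℤ[X]} {Δ : ℤ} {p v : ℕ} [Fact p.Prime]
    (hab : a * f + b * Polynomial.derivative f = Polynomial.C Δ)
    (hΔ : ¬ (p : ℤ) ^ (v + 1) ∣ Δ) (k : ℕ) :
    #{z : ZMod (p ^ k) × ZMod (p ^ k) |
      (f.map (Int.castRingHom (ZMod (p ^ k)))).eval z.1 * z.2 = 0} ≤
      (k + 1) * p ^ k * zerosBound p v f := by
  have hp : p.Prime := Fact.out
  let T : ℕ → Finset (ZMod (p ^ k) × ZMod (p ^ k)) := fun j =>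
    if hjk : j ≤ k then
      ({t : ZMod (p ^ k) | ZMod.castHom (pow_dvd_pow p hjk) (ZMod (p ^ j)) t ∈ zerosMod f (p ^ j)}
        : Finset _) ×ˢ ({y : ZMod (p ^ k) | ((p ^ j : ℕ) : ZMod (p ^ k)) * y = 0} : Finset _)
    else ∅
  have hT : ∀ j ∈ Finset.range (k + 1), (T j).card ≤ p ^ k * zerosBound p v f := by
    intro j hj
    have hjk : j ≤ k := by simpa [Nat.lt_succ_iff] using hj
    simp only [T, dif_pos hjk, Finset.card_product]
    have h2 : #{y : ZMod (p ^ k) | ((p ^ j : ℕ) : ZMod (p ^ k)) * y = 0} ≤ p ^ j := by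
      refine card_le_of_forall_mul_sub_eq_zero (pow_pos hp.pos _) _ fun t ht t₀ ht₀ => ?_
      simp only [Finset.mem_filter, Finset.mem_univ, true_and] at ht ht₀
      rw [mul_sub, ht, ht₀, sub_zero]
    calc _ ≤ (p ^ (k - j) * zerosBound p v f) * p ^ j :=
          Nat.mul_le_mul (card_dvd_eval_le hab hΔ hjk) h2
      _ = p ^ (k - j + j) * zerosBound p v f := by rw [pow_add]; ring
      _ = _ := by rw [Nat.sub_add_cancel hjk]
  have hcover : ({z : ZMod (p ^ k) × ZMod (p ^ k) |
      (f.map (Int.castRingHom (ZMod (p ^ k)))).eval z.1 * z.2 = 0} : Finset _) ⊆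
      (Finset.range (k + 1)).biUnion T := by
    rintro ⟨t, y⟩ hz
    obtain ⟨x, rfl⟩ := ZMod.intCast_surjective t
    rw [Finset.mem_filter, Polynomial.eval_intCast_map, eq_intCast] at hz
    have hz := hz.2
    rw [Finset.mem_biUnion]
    by_cases hk : (p : ℤ) ^ k ∣ f.eval x
    · refine ⟨k, by simp, ?_⟩
      simp only [T, dif_pos le_rfl, Finset.mem_product, Finset.mem_filter, Finset.mem_univ,
        true_and, map_intCast, intCast_mem_zerosMod]
      refine ⟨by exact_mod_cast hk, ?_⟩
      rw [ZMod.natCast_self, zero_mul]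
    · obtain ⟨j, hj1, hj2⟩ : ∃ j, (p : ℤ) ^ j ∣ f.eval x ∧ ¬ (p : ℤ) ^ (j + 1) ∣ f.eval x := by
        by_contra! hcon
        exact hk (Nat.rec (by simp) hcon k)
      have hjk : j ≤ k := by
        by_contra! h
        exact hk ((pow_dvd_pow _ h.le).trans hj1)
      refine ⟨j, by simpa [Nat.lt_succ_iff] using hjk, ?_⟩
      simp only [T, dif_pos hjk, Finset.mem_product, Finset.mem_filter, Finset.mem_univ,
        true_and, map_intCast, intCast_mem_zerosMod]
      exact ⟨by exact_mod_cast hj1, natCast_pow_mul_eq_zero hp hj2 hz⟩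
  calc _ ≤ _ := Finset.card_le_card hcover
    _ ≤ ∑ j ∈ Finset.range (k + 1), (T j).card := Finset.card_biUnion_le
    _ ≤ ∑ _j ∈ Finset.range (k + 1), p ^ k * zerosBound p v f := Finset.sum_le_sum hT
    _ = _ := by simp [mul_assoc]

theorem adjugate_mul_eq_zero_of_mulVec_eq_zero {n R : Type*} [Fintype n] [DecidableEq n]
    [CommRing R] {N : Matrix n n R} {h : n → R} (hN : N *ᵥ h = 0) {j : n} (hj : h j = 0)
    (i l : n) : N.adjugate j i * h l = 0 := by
  rw [Matrix.adjugate_apply]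
  set A := N.updateRow i (Pi.single j 1)
  have hA : A *ᵥ h = 0 := by
    ext k
    by_cases hk : k = i
    · subst hk
      simp [A, Matrix.mulVec, hj]
    · have := congrFun hN k
      simpa [A, Matrix.mulVec, Matrix.updateRow_ne hk] using this
  have := congrFun (congrArg (fun M : Matrix n n R => M *ᵥ h) (Matrix.adjugate_mul A)) l
  simpa [← Matrix.mulVec_mulVec, hA, Matrix.smul_mulVec] using this.symm

theorem det_mul_eq_zero_of_mulVec_eq_zero {n R : Type*} [Fintype n] [DecidableEq n]
    [CommRing R] {N : Matrix n n R} {h : n → R} (hN : N *ᵥ h = 0) (l : n) : N.det * h l = 0 := by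
  have := congrFun (congrArg (fun M : Matrix n n R => M *ᵥ h) (Matrix.adjugate_mul N)) l
  simpa [← Matrix.mulVec_mulVec, hN, Matrix.smul_mulVec] using this.symm

/-- Pairs consisting of a parameter `t` and a vector in the kernel of `t * A + B`, over `R`. -/
def pencilKernel {s : ℕ} (A B : Matrix (Fin s) (Fin s) ℤ) (R : Type*) [CommRing R] [Fintype R]
    [DecidableEq R] : Finset (R × (Fin s → R)) :=
  {z | (z.1 • A.map (Int.castRingHom R) + B.map (Int.castRingHom R)) *ᵥ z.2 = 0}

theorem exists_adjugate_not_dvd {s : ℕ} [NeZero s] {A B : Matrix (Fin s) (Fin s) ℤ} {a b : ℤ[X]}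
    {Δ d : ℤ}
    (hab : a * pencilDet A B + b * Polynomial.derivative (pencilDet A B) = Polynomial.C Δ)
    (hΔ : ¬ d ∣ Δ) (x : ℤ) : ∃ j i, ¬ d ∣ (x • A + B).adjugate j i := by
  by_contra! h
  refine hΔ (dvd_of_dvd_eval hab (x := x) ?_ ?_)
  · rw [eval_pencilDet, Matrix.det_eq_sum_mul_adjugate_row _ 0]
    exact Finset.dvd_sum fun j _ => dvd_mul_of_dvd_right (h _ _) _
  · rw [eval_derivative_pencilDet]
    exact Finset.dvd_sum fun i _ => Finset.dvd_sum fun k _ => dvd_mul_of_dvd_right (h _ _) _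

theorem zerosBound_pos {p : ℕ} (hp : p.Prime) (v : ℕ) (f : ℤ[X]) : 0 < zerosBound p v f := by
  rw [zerosBound]
  split_ifs
  · omega
  · exact pow_pos hp.pos _

theorem card_pencilKernel_le {s : ℕ} {A B : Matrix (Fin s) (Fin s) ℤ} {a b : ℤ[X]} {Δ : ℤ}
    {p v : ℕ} [Fact p.Prime]
    (hab : a * pencilDet A B + b * Polynomial.derivative (pencilDet A B) = Polynomial.C Δ)
    (hΔ : ¬ (p : ℤ) ^ (v + 1) ∣ Δ) (k : ℕ) :
    (pencilKernel A B (ZMod (p ^ k))).card ≤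
      (p ^ v) ^ s * ((k + 1) * p ^ k * zerosBound p v (pencilDet A B)) := by
  have hp : p.Prime := Fact.out
  rcases Nat.eq_zero_or_pos s with rfl | hs
  · refine (Finset.card_le_univ _).trans ?_
    have h1 : 1 ≤ zerosBound p v (pencilDet A B) := zerosBound_pos hp _ _
    simp only [Fintype.card_prod, ZMod.card, Fintype.card_unique, mul_one, pow_zero, one_mul]
    nlinarith [Nat.zero_le k, pow_pos hp.pos k, Nat.mul_le_mul (Nat.mul_le_mul
      (Nat.succ_le_succ (Nat.zero_le k)) (le_refl (p ^ k))) h1]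
  have : NeZero s := ⟨hs.ne'⟩
  choose j i hji using exists_adjugate_not_dvd hab hΔ
  let lift : ZMod (p ^ k) → ℤ := fun t => (t.val : ℤ)
  have hlift : ∀ t, ((lift t : ℤ) : ZMod (p ^ k)) = t := fun t => by simp [lift]
  let N : ZMod (p ^ k) → Matrix (Fin s) (Fin s) (ZMod (p ^ k)) := fun t =>
    t • A.map (Int.castRingHom _) + B.map (Int.castRingHom _)
  have hN : ∀ t, N t = (Int.castRingHom (ZMod (p ^ k))).mapMatrix (lift t • A + B) := by
    intro t
    ext r c
    simp only [N, RingHom.mapMatrix_apply, Matrix.map_apply, Matrix.add_apply, Matrix.smul_apply,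
      smul_eq_mul, map_add, map_mul, eq_intCast, hlift]
  have hadj : ∀ t, (N t).adjugate (j (lift t)) (i (lift t)) =
      (((lift t • A + B).adjugate (j (lift t)) (i (lift t)) : ℤ) : ZMod (p ^ k)) := by
    intro t
    rw [hN, ← RingHom.map_adjugate]
    rfl
  have hdet : ∀ t, ((pencilDet A B).map (Int.castRingHom (ZMod (p ^ k)))).eval t = (N t).det := by
    intro t
    rw [map_pencilDet, eval_pencilDet]
  let F : ZMod (p ^ k) × (Fin s → ZMod (p ^ k)) → ZMod (p ^ k) × ZMod (p ^ k) :=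
    fun z => (z.1, z.2 (j (lift z.1)))
  have hker : ∀ z, z ∈ pencilKernel A B (ZMod (p ^ k)) ↔ N z.1 *ᵥ z.2 = 0 := by
    intro z
    simp [pencilKernel, N]
  refine (Finset.card_le_mul_card_image (f := F) _ ((p ^ v) ^ s) fun c _ => ?_).trans ?_
  · set S := {z ∈ pencilKernel A B (ZMod (p ^ k)) | F z = c}
    rcases S.eq_empty_or_nonempty with hS | ⟨z₀, hz₀⟩
    · simp [hS]
    set m := (lift c.1 • A + B).adjugate (j (lift c.1)) (i (lift c.1)) with hm
    have hz₀' := Finset.mem_filter.1 hz₀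
    rw [hker] at hz₀'
    obtain ⟨hz₀k, hz₀c⟩ := hz₀'
    have hz₀1 : z₀.1 = c.1 := congrArg Prod.fst hz₀c
    have hz₀2 : z₀.2 (j (lift z₀.1)) = c.2 := congrArg Prod.snd hz₀c
    calc S.card ≤ (Fintype.piFinset fun _ : Fin s =>
          ({x : ZMod (p ^ k) | (m : ZMod (p ^ k)) * x = 0} : Finset _)).card := by
          refine Finset.card_le_card_of_injOn (fun z => z.2 - z₀.2) (fun z hz => ?_) ?_
          · have hz' := Finset.mem_filter.1 hz
            rw [hker] at hz'
            obtain ⟨hzk, hzc⟩ := hz'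
            have hz1 : z.1 = c.1 := congrArg Prod.fst hzc
            have hz2 : z.2 (j (lift z.1)) = c.2 := congrArg Prod.snd hzc
            rw [hz1] at hzk hz2
            rw [hz₀1] at hz₀k hz₀2
            refine Fintype.mem_piFinset.2 fun l => ?_
            rw [Finset.mem_filter]
            refine ⟨Finset.mem_univ _, ?_⟩
            rw [hm, ← hadj]
            refine adjugate_mul_eq_zero_of_mulVec_eq_zero ?_ ?_ _ l
            · rw [Matrix.mulVec_sub, hzk, hz₀k, sub_zero]
            · rw [Pi.sub_apply, hz2, hz₀2, sub_self]
          · intro z hz w hw hzw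
            have hz1 : z.1 = c.1 := congrArg Prod.fst (Finset.mem_filter.1 hz).2
            have hw1 : w.1 = c.1 := congrArg Prod.fst (Finset.mem_filter.1 hw).2
            exact Prod.ext (hz1.trans hw1.symm) (sub_left_injective hzw)
      _ = #{x : ZMod (p ^ k) | (m : ZMod (p ^ k)) * x = 0} ^ s := by simp
      _ ≤ (p ^ v) ^ s := Nat.pow_le_pow_left (card_mul_eq_zero_le (hji _)) s
  · refine Nat.mul_le_mul_left _ (le_trans (Finset.card_le_card ?_)
      (card_eval_mul_eq_zero_le hab hΔ k))
    intro c hc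
    obtain ⟨z, hz, rfl⟩ := Finset.mem_image.1 hc
    rw [hker] at hz
    rw [Finset.mem_filter]
    refine ⟨Finset.mem_univ _, ?_⟩
    rw [hdet]
    exact det_mul_eq_zero_of_mulVec_eq_zero hz _

open Classical in
/-- Pairs consisting of a coprime pair `a` and a vector in the kernel of `a₁ * A + a₂ * B`,
over `R`. -/
noncomputable def primitiveKernel {s : ℕ} (A B : Matrix (Fin s) (Fin s) ℤ) (R : Type*) [CommRing R]
    [Fintype R] : Finset ((R × R) × (Fin s → R)) :=
  {z | IsCoprime z.1.1 z.1.2 ∧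
    (z.1.1 • A.map (Int.castRingHom R) + z.1.2 • B.map (Int.castRingHom R)) *ᵥ z.2 = 0}

theorem mem_primitiveKernel {s : ℕ} {A B : Matrix (Fin s) (Fin s) ℤ} {R : Type*} [CommRing R]
    [Fintype R] {z : (R × R) × (Fin s → R)} : z ∈ primitiveKernel A B R ↔ IsCoprime z.1.1 z.1.2 ∧
      (z.1.1 • A.map (Int.castRingHom R) + z.1.2 • B.map (Int.castRingHom R)) *ᵥ z.2 = 0 := by
  simp [primitiveKernel]

theorem map_mem_primitiveKernel {s : ℕ} {A B : Matrix (Fin s) (Fin s) ℤ} {R S : Type*} [CommRing R]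
    [Fintype R] [CommRing S] [Fintype S] (f : R →+* S) {z : (R × R) × (Fin s → R)}
    (hz : z ∈ primitiveKernel A B R) :
    ((f z.1.1, f z.1.2), f ∘ z.2) ∈ primitiveKernel A B S := by
  rw [mem_primitiveKernel] at hz ⊢
  refine ⟨hz.1.map f, ?_⟩
  ext i
  have := congrArg f (congrFun hz.2 i)
  rw [RingHom.map_mulVec] at this
  simp only [Pi.zero_apply, map_zero] at this
  rw [Pi.zero_apply, ← this]
  congr 2
  ext i j
  simp

theorem card_primitiveKernel_mul_le {s : ℕ} (A B : Matrix (Fin s) (Fin s) ℤ) {m n : ℕ} [NeZero m]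
    [NeZero n] [NeZero (m * n)] (h : m.Coprime n) :
    (primitiveKernel A B (ZMod (m * n))).card ≤
      (primitiveKernel A B (ZMod m)).card * (primitiveKernel A B (ZMod n)).card := by
  rw [← Finset.card_product]
  let e := ZMod.chineseRemainder h
  let f : ZMod (m * n) →+* ZMod m := (RingHom.fst _ _).comp e.toRingHom
  let g : ZMod (m * n) →+* ZMod n := (RingHom.snd _ _).comp e.toRingHom
  have hfg : ∀ x y, f x = f y → g x = g y → x = y := fun x y h1 h2 =>
    e.injective (Prod.ext h1 h2)
  refine Finset.card_le_card_of_injOn (fun z => (((f z.1.1, f z.1.2), f ∘ z.2),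
    ((g z.1.1, g z.1.2), g ∘ z.2))) (fun z hz => ?_) ?_
  · exact Finset.mem_product.2 ⟨map_mem_primitiveKernel f hz, map_mem_primitiveKernel g hz⟩
  · rintro ⟨⟨x, y⟩, v⟩ - ⟨⟨x', y'⟩, v'⟩ - hz
    simp only [Prod.mk.injEq] at hz
    obtain ⟨⟨⟨h1, h2⟩, h3⟩, ⟨h4, h5⟩, h6⟩ := hz
    simp only [Prod.mk.injEq]
    exact ⟨⟨hfg _ _ h1 h4, hfg _ _ h2 h5⟩,
      funext fun i => hfg _ _ (congrFun h3 i) (congrFun h6 i)⟩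

theorem mulVec_inv_smul_eq_zero {s : ℕ} {R : Type*} [CommRing R] {A B : Matrix (Fin s) (Fin s) R}
    {x y : R} {h : Fin s → R} (hx : IsUnit x) (hz : (x • A + y • B) *ᵥ h = 0) :
    ((Ring.inverse x * y) • B + A) *ᵥ h = 0 := by
  have h1 := congrArg (fun w => Ring.inverse x • w) hz
  simp only [smul_zero, ← Matrix.smul_mulVec, smul_add, smul_smul,
    Ring.inverse_mul_cancel x hx, one_smul] at h1
  rw [add_comm]
  exact h1

theorem card_primitiveKernel_le_add {s : ℕ} (A B : Matrix (Fin s) (Fin s) ℤ) (R : Type*)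
    [CommRing R] [IsLocalRing R] [Fintype R] [DecidableEq R] :
    (primitiveKernel A B R).card ≤ Fintype.card R * ((pencilKernel B A R).card +
      (pencilKernel A B R).card) := by
  classical
  have hsub : primitiveKernel A B R ⊆ {z ∈ primitiveKernel A B R | IsUnit z.1.1} ∪
      {z ∈ primitiveKernel A B R | IsUnit z.1.2} := by
    intro z hz
    obtain ⟨a, b, hab⟩ := (mem_primitiveKernel.1 hz).1
    rw [Finset.mem_union, Finset.mem_filter, Finset.mem_filter]
    rcases IsLocalRing.isUnit_or_isUnit_of_add_one hab with h | h
    · exact Or.inl ⟨hz, isUnit_of_mul_isUnit_right h⟩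
    · exact Or.inr ⟨hz, isUnit_of_mul_isUnit_right h⟩
  have hinv : ∀ x y y' : R, IsUnit x → Ring.inverse x * y = Ring.inverse x * y' → y = y' := by
    intro x y y' hx h
    have := congrArg (x * ·) h
    simpa [← mul_assoc, Ring.mul_inverse_cancel x hx] using this
  have h1 : #{z ∈ primitiveKernel A B R | IsUnit z.1.1} ≤
      Fintype.card R * (pencilKernel B A R).card := by
    rw [← Finset.card_univ, ← Finset.card_product]
    refine Finset.card_le_card_of_injOn
      (fun z => (z.1.1, (Ring.inverse z.1.1 * z.1.2, z.2))) (fun z hz => ?_) ?_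
    · obtain ⟨hz, hu⟩ := Finset.mem_filter.1 hz
      simp only [Finset.coe_product, Set.mem_prod, Finset.mem_coe, Finset.mem_univ, true_and,
        pencilKernel, Finset.mem_filter]
      exact mulVec_inv_smul_eq_zero hu (mem_primitiveKernel.1 hz).2
    · rintro ⟨⟨x, y⟩, v⟩ hz ⟨⟨x', y'⟩, v'⟩ - h
      simp only [Prod.mk.injEq] at h ⊢
      obtain ⟨rfl, h2, h3⟩ := h
      exact ⟨⟨rfl, hinv x _ _ (Finset.mem_filter.1 hz).2 h2⟩, h3⟩
  have h2 : #{z ∈ primitiveKernel A B R | IsUnit z.1.2} ≤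
      Fintype.card R * (pencilKernel A B R).card := by
    rw [← Finset.card_univ, ← Finset.card_product]
    refine Finset.card_le_card_of_injOn
      (fun z => (z.1.2, (Ring.inverse z.1.2 * z.1.1, z.2))) (fun z hz => ?_) ?_
    · obtain ⟨hz, hu⟩ := Finset.mem_filter.1 hz
      simp only [Finset.coe_product, Set.mem_prod, Finset.mem_coe, Finset.mem_univ, true_and,
        pencilKernel, Finset.mem_filter]
      refine mulVec_inv_smul_eq_zero hu ?_
      rw [add_comm]
      exact (mem_primitiveKernel.1 hz).2
    · rintro ⟨⟨x, y⟩, v⟩ hz ⟨⟨x', y'⟩, v'⟩ - h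
      simp only [Prod.mk.injEq] at h ⊢
      obtain ⟨rfl, h2, h3⟩ := h
      exact ⟨⟨hinv y _ _ (Finset.mem_filter.1 hz).2 h2, rfl⟩, h3⟩
  calc _ ≤ _ := Finset.card_le_card hsub
    _ ≤ _ := Finset.card_union_le _ _
    _ ≤ _ := by rw [mul_add]; exact Nat.add_le_add h1 h2

theorem isLocalRing_zmod_prime_pow (p k : ℕ) [Fact p.Prime] (hk : 0 < k) :
    IsLocalRing (ZMod (p ^ k)) := by
  have hp : p.Prime := Fact.out
  have : Fact (1 < p ^ k) := ⟨Nat.one_lt_pow hk.ne' hp.one_lt⟩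
  have hunit : ∀ x : ℤ, ¬ (p : ℤ) ∣ x → IsUnit (x : ZMod (p ^ k)) := by
    intro x hx
    rw [ZMod.coe_int_isUnit_iff_isCoprime]
    push_cast
    exact (((Nat.prime_iff_prime_int.1 hp).coprime_iff_not_dvd).2 hx).pow_left
  refine IsLocalRing.of_isUnit_or_isUnit_one_sub_self fun a => ?_
  obtain ⟨x, rfl⟩ := ZMod.intCast_surjective a
  by_cases hx : (p : ℤ) ∣ x
  · refine Or.inr ?_
    rw [← Int.cast_one, ← Int.cast_sub]
    refine hunit _ fun h => ?_
    have h1 : (p : ℤ) ∣ 1 := (dvd_sub_left hx).1 h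
    exact hp.not_dvd_one (by exact_mod_cast h1)
  · exact Or.inl (hunit x hx)

theorem exists_card_primitiveKernel_le {s : ℕ} {M₁ M₂ : Matrix (Fin s) (Fin s) ℤ}
    (hM₁ : M₁.IsSymm) (hM₂ : M₂.IsSymm) (hns : NonsingularPair s M₁ M₂) :
    ∃ (K : ℕ → ℕ) (D P : ℕ), (∀ p, P ≤ p → K p ≤ D) ∧ ∀ (p : ℕ) [Fact p.Prime] (k : ℕ), 0 < k →
      (primitiveKernel (2 • M₁) (2 • M₂) (ZMod (p ^ k))).card ≤ K p * (k + 1) * (p ^ k) ^ 2 := by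
  obtain ⟨Δ₁, hΔ₁, a₁, b₁, h₁⟩ := exists_bezout_pencilDet hM₁ hM₂ hns
  obtain ⟨Δ₂, hΔ₂, a₂, b₂, h₂⟩ := exists_bezout_pencilDet hM₂ hM₁ hns.symm
  set f₁ := pencilDet (2 • M₁) (2 • M₂)
  set f₂ := pencilDet (2 • M₂) (2 • M₁)
  refine ⟨fun p => (p ^ padicValInt p Δ₂) ^ s * zerosBound p (padicValInt p Δ₂) f₂ +
    (p ^ padicValInt p Δ₁) ^ s * zerosBound p (padicValInt p Δ₁) f₁,
    f₂.natDegree + 1 + (f₁.natDegree + 1), Δ₁.natAbs + Δ₂.natAbs + 1, ?_, ?_⟩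
  · intro p hp
    have hv : ∀ Δ : ℤ, Δ ≠ 0 → Δ.natAbs < p → padicValInt p Δ = 0 := by
      intro Δ hΔ hlt
      refine padicValInt.eq_zero_of_not_dvd fun hdvd => ?_
      have := Nat.le_of_dvd (Int.natAbs_pos.2 hΔ) (Int.natCast_dvd.1 hdvd)
      omega
    simp [hv Δ₁ hΔ₁ (by omega), hv Δ₂ hΔ₂ (by omega), zerosBound]
  · intro p _ k hk
    have hnd : ∀ Δ : ℤ, Δ ≠ 0 → ¬ (p : ℤ) ^ (padicValInt p Δ + 1) ∣ Δ := by
      intro Δ hΔ h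
      have := (padicValInt_dvd_iff _ _).1 h
      omega
    have e₁ := card_pencilKernel_le h₁ (hnd Δ₁ hΔ₁) k
    have e₂ := card_pencilKernel_le h₂ (hnd Δ₂ hΔ₂) k
    have : IsLocalRing (ZMod (p ^ k)) := isLocalRing_zmod_prime_pow p k hk
    refine (card_primitiveKernel_le_add _ _ _).trans ?_
    rw [ZMod.card]
    refine (Nat.mul_le_mul_left _ (Nat.add_le_add e₂ e₁)).trans (le_of_eq ?_)
    ring

theorem exists_linear_le_rpow {c : ℝ} (hc : 1 < c) :
    ∃ K : ℝ, 1 ≤ K ∧ ∀ k : ℕ, (k + 1 : ℝ) ≤ K * c ^ k := by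
  refine ⟨max 1 (1 / (c - 1)), le_max_left _ _, fun k => ?_⟩
  have hb : 1 + k * (c - 1) ≤ c ^ k := by
    have := one_add_mul_le_pow (a := c - 1) (by linarith) k
    simpa using this
  set K := max 1 (1 / (c - 1))
  have hc' : 0 < c - 1 := by linarith
  have hK1 : 1 ≤ K := le_max_left _ _
  have hK2 : 1 ≤ K * (c - 1) := by
    have : 1 / (c - 1) ≤ K := le_max_right _ _
    rwa [div_le_iff₀ hc'] at this
  calc (k + 1 : ℝ) ≤ K * (1 + k * (c - 1)) := by nlinarith [(Nat.cast_nonneg k : (0 : ℝ) ≤ k)]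
    _ ≤ K * c ^ k := by gcongr

/-- A submultiplicative function which grows at most linearly in `k` along the powers `p ^ k`,
uniformly in large primes `p`, is bounded by arbitrarily small powers. -/
theorem exists_le_rpow_of_submultiplicative {f : ℕ → ℝ} (hf0 : ∀ q : ℕ, 0 ≤ f q) (hf1 : f 1 ≤ 1)
    (hmul : ∀ m n : ℕ, 1 < m → 1 < n → m.Coprime n → f (m * n) ≤ f m * f n)
    {K : ℕ → ℕ} {D P : ℕ} (hKD : ∀ p : ℕ, P ≤ p → K p ≤ D)
    (hK : ∀ p k : ℕ, p.Prime → 0 < k → f (p ^ k) ≤ K p * (k + 1)) {δ : ℝ} (hδ : 0 < δ) :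
    ∃ C : ℝ, 0 < C ∧ ∀ q : ℕ, 1 ≤ q → f q ≤ C * (q : ℝ) ^ δ := by
  obtain ⟨P', hP'⟩ : ∃ P' : ℕ, ∀ p : ℕ, P' ≤ p → (2 * (D + 1) : ℝ) ≤ (p : ℝ) ^ δ :=
    Filter.eventually_atTop.1 (((tendsto_rpow_atTop hδ).comp
      tendsto_natCast_atTop_atTop).eventually_ge_atTop _)
  have hpow : ∀ p k : ℕ, (((p ^ k : ℕ) : ℝ)) ^ δ = ((p : ℝ) ^ δ) ^ k := by
    intro p k
    rw [Nat.cast_pow, ← Real.rpow_natCast, ← Real.rpow_natCast, ← Real.rpow_mul p.cast_nonneg,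
      ← Real.rpow_mul p.cast_nonneg, mul_comm]
  have hlocal : ∀ p : ℕ, ∃ c : ℝ, 1 ≤ c ∧ (max P P' ≤ p → c = 1) ∧
      (p.Prime → ∀ k : ℕ, 0 < k → f (p ^ k) ≤ c * ((p ^ k : ℕ) : ℝ) ^ δ) := by
    intro p
    by_cases hp : max P P' ≤ p
    · refine ⟨1, le_rfl, fun _ => rfl, fun hpp k hk => (hK p k hpp hk).trans ?_⟩
      have h1 : (K p : ℝ) ≤ D := by exact_mod_cast hKD p ((le_max_left _ _).trans hp)
      have h2 := hP' p ((le_max_right _ _).trans hp)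
      have h3 : (k + 1 : ℝ) ≤ 2 ^ k := by exact_mod_cast Nat.lt_two_pow_self
      rw [hpow, one_mul]
      calc (K p * (k + 1) : ℝ) ≤ (D + 1) * 2 ^ k := by gcongr; linarith
        _ ≤ (D + 1) ^ k * 2 ^ k := by
          gcongr
          exact le_self_pow₀ (by linarith [(Nat.cast_nonneg D : (0 : ℝ) ≤ D)]) hk.ne'
        _ = (2 * (D + 1)) ^ k := by rw [mul_pow, mul_comm]
        _ ≤ _ := by gcongr
    · by_cases hpp : p.Prime
      · obtain ⟨L, hL1, hL⟩ := exists_linear_le_rpow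
          (Real.one_lt_rpow (by exact_mod_cast hpp.one_lt : (1 : ℝ) < p) hδ)
        refine ⟨(K p + 1) * L, ?_, fun h => absurd h hp, fun _ k hk => (hK p k hpp hk).trans ?_⟩
        · nlinarith [(Nat.cast_nonneg (K p) : (0 : ℝ) ≤ K p)]
        · rw [hpow, mul_assoc]
          gcongr
          · linarith
          · exact hL k
      · exact ⟨1, le_rfl, fun _ => rfl, fun h => absurd h hpp⟩
  choose c hc1 hcP hc using hlocal
  have hmain : ∀ q : ℕ, 1 ≤ q → f q ≤ (∏ p ∈ q.primeFactors, c p) * (q : ℝ) ^ δ := by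
    intro q
    induction q using Nat.recOnPosPrimePosCoprime with
    | prime_pow p k hp hk =>
      intro _
      rw [Nat.primeFactors_prime_pow hk.ne' hp, Finset.prod_singleton]
      exact hc p hp k hk
    | zero => simp
    | one => simpa using hf1
    | coprime a b ha hb hab iha ihb =>
      intro _
      have h1 := iha ha.le
      have h2 := ihb hb.le
      refine (hmul a b ha hb hab).trans ((mul_le_mul h1 h2 (hf0 b) ((hf0 a).trans h1)).trans
        (le_of_eq ?_))
      rw [hab.primeFactors_mul, Finset.prod_union hab.disjoint_primeFactors, Nat.cast_mul,
        Real.mul_rpow a.cast_nonneg b.cast_nonneg]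
      ring
  refine ⟨∏ p ∈ Finset.range (max P P'), c p,
    Finset.prod_pos fun p _ => zero_lt_one.trans_le (hc1 p), fun q hq => (hmain q hq).trans ?_⟩
  refine mul_le_mul_of_nonneg_right ?_ (by positivity)
  calc ∏ p ∈ q.primeFactors, c p = ∏ p ∈ q.primeFactors with p < max P P', c p := by
        rw [Finset.prod_filter]
        refine Finset.prod_congr rfl fun p _ => ?_
        split_ifs with h
        · rfl
        · exact hcP p (not_lt.1 h)
    _ ≤ _ := by
        refine Finset.prod_le_prod_of_subset_of_one_le ?_
          (fun p _ => zero_le_one.trans (hc1 p)) fun p _ _ => hc1 p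
        intro p hp
        exact Finset.mem_range.2 (Finset.mem_filter.1 hp).2

theorem exists_card_primitiveKernel_le_rpow {s : ℕ} {M₁ M₂ : Matrix (Fin s) (Fin s) ℤ}
    (hM₁ : M₁.IsSymm) (hM₂ : M₂.IsSymm) (hns : NonsingularPair s M₁ M₂) {δ : ℝ} (hδ : 0 < δ) :
    ∃ C : ℝ, 0 < C ∧ ∀ (q : ℕ) [NeZero q],
      ((primitiveKernel (2 • M₁) (2 • M₂) (ZMod q)).card : ℝ) ≤ C * (q : ℝ) ^ (2 + δ) := by
  classical
  obtain ⟨K, D, P, hKD, hK⟩ := exists_card_primitiveKernel_le hM₁ hM₂ hns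
  let T : ℕ → ℕ := fun q => if h : NeZero q then
    (primitiveKernel (2 • M₁) (2 • M₂) (ZMod q)).card else 0
  have hT : ∀ q [h : NeZero q], T q = (primitiveKernel (2 • M₁) (2 • M₂) (ZMod q)).card :=
    fun q h => dif_pos h
  have h1 : (T 1 : ℝ) / ((1 : ℕ) : ℝ) ^ 2 ≤ 1 := by
    have h : (primitiveKernel (2 • M₁) (2 • M₂) (ZMod 1)).card ≤ 1 :=
      Finset.card_le_one.2 fun a _ b _ => Subsingleton.elim a b
    rw [hT]
    simpa using h
  have hmul : ∀ m n : ℕ, 1 < m → 1 < n → m.Coprime n →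
      (T (m * n) : ℝ) / ((m * n : ℕ) : ℝ) ^ 2 ≤ T m / (m : ℝ) ^ 2 * (T n / (n : ℝ) ^ 2) := by
    intro m n hm hn hmn
    have : NeZero m := ⟨by omega⟩
    have : NeZero n := ⟨by omega⟩
    have h : (T (m * n) : ℝ) ≤ T m * T n := by
      rw [hT, hT, hT]
      exact_mod_cast card_primitiveKernel_mul_le _ _ hmn
    rw [div_mul_div_comm, Nat.cast_mul, mul_pow]
    gcongr
  have hpow : ∀ p k : ℕ, p.Prime → 0 < k →
      (T (p ^ k) : ℝ) / ((p ^ k : ℕ) : ℝ) ^ 2 ≤ K p * (k + 1) := by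
    intro p k hp hk
    have : Fact p.Prime := ⟨hp⟩
    have hpos : (0 : ℝ) < ((p ^ k : ℕ) : ℝ) ^ 2 := by
      have := hp.pos
      positivity
    rw [div_le_iff₀ hpos, hT]
    exact_mod_cast hK p k hk
  obtain ⟨C, hC, hbound⟩ := exists_le_rpow_of_submultiplicative (f := fun q => T q / (q : ℝ) ^ 2)
    (fun q => by positivity) h1 hmul hKD hpow hδ
  refine ⟨C, hC, fun q hq => ?_⟩
  have hq0 : (0 : ℝ) < q := by exact_mod_cast NeZero.pos q
  have := hbound q (NeZero.pos q)
  rw [div_le_iff₀ (by positivity), hT] at this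
  refine this.trans (le_of_eq ?_)
  rw [Real.rpow_add hq0]
  norm_num
  ring

theorem eqc_eq_stdAddChar {q : ℕ} [NeZero q] (n : ℤ) :
    eqc q n = ZMod.stdAddChar (n : ZMod q) := by
  rw [ZMod.stdAddChar_coe, eqc, e2pi]
  congr 1
  push_cast
  ring

theorem sum_stdAddChar_dotProduct_eq_zero {s q : ℕ} [NeZero q] {w : Fin s → ZMod q} (hw : w ≠ 0) :
    ∑ b : Fin s → ZMod q, (ZMod.stdAddChar (b ⬝ᵥ w) : ℂ) = 0 := by
  let φ : (Fin s → ZMod q) →+ ZMod q :=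
    { toFun := fun b => b ⬝ᵥ w
      map_zero' := zero_dotProduct w
      map_add' := fun x y => add_dotProduct x y w }
  refine AddChar.sum_eq_zero_of_ne_one (ψ := (ZMod.stdAddChar (N := q)).compAddMonoidHom φ)
    fun h => hw ?_
  ext l
  refine ZMod.injective_stdAddChar ?_
  have := DFunLike.congr_fun h (Pi.single l 1)
  simpa [φ] using this

theorem normSq_sum_quadratic_le {s q : ℕ} [NeZero q] {N : Matrix (Fin s) (Fin s) (ZMod q)}
    (hN : N.IsSymm) (u : Fin s → ZMod q) :
    ‖∑ b : Fin s → ZMod q, (ZMod.stdAddChar (b ⬝ᵥ N *ᵥ b + b ⬝ᵥ u) : ℂ)‖ ^ 2 ≤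
      (q : ℝ) ^ s * #{h : Fin s → ZMod q | (2 • N) *ᵥ h = 0} := by
  let Q : (Fin s → ZMod q) → ZMod q := fun b => b ⬝ᵥ N *ᵥ b + b ⬝ᵥ u
  have hQ : ∀ b h, Q (h + b) - Q b = Q h + b ⬝ᵥ (2 • N) *ᵥ h := by
    intro b h
    have hsymm : h ⬝ᵥ N *ᵥ b = b ⬝ᵥ N *ᵥ h := by
      rw [dotProduct_mulVec, ← mulVec_transpose, hN.eq, dotProduct_comm]
    simp only [Q, mulVec_add, add_dotProduct, dotProduct_add, hsymm, two_smul, add_mulVec]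
    ring
  have hexp : ((‖∑ b, (ZMod.stdAddChar (Q b) : ℂ)‖ ^ 2 : ℝ) : ℂ) =
      ∑ h, ZMod.stdAddChar (Q h) * ∑ b, (ZMod.stdAddChar (b ⬝ᵥ (2 • N) *ᵥ h) : ℂ) := by
    calc ((‖∑ b, (ZMod.stdAddChar (Q b) : ℂ)‖ ^ 2 : ℝ) : ℂ)
        = (∑ b, (ZMod.stdAddChar (Q b) : ℂ)) * ∑ b, (ZMod.stdAddChar (-Q b) : ℂ) := by
          rw [Complex.ofReal_pow, ← Complex.mul_conj', map_sum]
          simp only [AddChar.map_neg_eq_conj]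
      _ = ∑ b, ∑ h, (ZMod.stdAddChar (Q (h + b)) * ZMod.stdAddChar (-Q b) : ℂ) := by
          rw [mul_comm, Finset.sum_mul]
          refine Finset.sum_congr rfl fun b _ => ?_
          rw [Finset.mul_sum, ← Equiv.sum_comp (Equiv.addRight b)]
          exact Finset.sum_congr rfl fun h _ => mul_comm _ _
      _ = ∑ h, ∑ b, (ZMod.stdAddChar (Q (h + b)) * ZMod.stdAddChar (-Q b) : ℂ) :=
          Finset.sum_comm
      _ = _ := by
          refine Finset.sum_congr rfl fun h _ => ?_
          rw [Finset.mul_sum]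
          refine Finset.sum_congr rfl fun b _ => ?_
          rw [← AddChar.map_add_eq_mul, ← AddChar.map_add_eq_mul, ← sub_eq_add_neg, hQ]
  have hnorm : ‖∑ b, (ZMod.stdAddChar (Q b) : ℂ)‖ ^ 2 =
      ‖((‖∑ b, (ZMod.stdAddChar (Q b) : ℂ)‖ ^ 2 : ℝ) : ℂ)‖ := by
    rw [Complex.norm_real, Real.norm_of_nonneg (by positivity)]
  change ‖∑ b, (ZMod.stdAddChar (Q b) : ℂ)‖ ^ 2 ≤ _
  rw [hnorm, hexp]
  calc _ ≤ ∑ h : Fin s → ZMod q, if (2 • N) *ᵥ h = 0 then (q : ℝ) ^ s else 0 := by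
        refine norm_sum_le_of_le _ fun h _ => ?_
        rw [norm_mul, AddChar.norm_apply, one_mul]
        split_ifs with h0
        · refine (norm_sum_le _ _).trans ?_
          simp [AddChar.norm_apply]
        · rw [sum_stdAddChar_dotProduct_eq_zero h0, norm_zero]
    _ = _ := by
        rw [← Finset.sum_filter, Finset.sum_const, nsmul_eq_mul, mul_comm]

theorem sum_piFinset_range_natCast {s q : ℕ} [NeZero q] (f : (Fin s → ZMod q) → ℂ) :
    ∑ b ∈ Fintype.piFinset (fun _ : Fin s => Finset.range q), f (fun i => (b i : ZMod q)) =
      ∑ b, f b := by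
  refine Finset.sum_nbij' (fun b i => (b i : ZMod q)) (fun b i => (b i).val) (fun b _ => by simp)
    (fun b _ => ?_) (fun b hb => ?_) (fun b _ => ?_) (fun b _ => rfl)
  · simp [Fintype.mem_piFinset, ZMod.val_lt]
  · ext i
    exact ZMod.val_cast_of_lt (Finset.mem_range.1 (Fintype.mem_piFinset.1 hb i))
  · ext i
    simp

theorem intCast_quadEval {s : ℕ} {R : Type*} [CommRing R] (M : Matrix (Fin s) (Fin s) ℤ)
    (x : Fin s → ℤ) : ((quadEval M x : ℤ) : R) =
      (fun i => (x i : R)) ⬝ᵥ M.map (Int.castRingHom R) *ᵥ (fun i => (x i : R)) := by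
  simp only [quadEval, dotProduct, mulVec, Finset.mul_sum]
  push_cast
  refine Finset.sum_congr rfl fun i _ => Finset.sum_congr rfl fun j _ => ?_
  simp only [Matrix.map_apply, eq_intCast]
  ring

theorem normSq_sum_eqc_le {s q : ℕ} [NeZero q] {M₁ M₂ : Matrix (Fin s) (Fin s) ℤ}
    (hM₁ : M₁.IsSymm) (hM₂ : M₂.IsSymm) (a : ℕ × ℕ) (u : Fin s → ℤ) :
    ‖∑ b ∈ Fintype.piFinset (fun _ : Fin s => Finset.range q),
      eqc q ((a.1 : ℤ) * quadEval M₁ (fun i => (b i : ℤ)) +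
        (a.2 : ℤ) * quadEval M₂ (fun i => (b i : ℤ)) + ∑ i, (b i : ℤ) * u i)‖ ^ 2 ≤
      (q : ℝ) ^ s * #{h : Fin s → ZMod q |
        ((a.1 : ZMod q) • (2 • M₁).map (Int.castRingHom (ZMod q)) +
          (a.2 : ZMod q) • (2 • M₂).map (Int.castRingHom (ZMod q))) *ᵥ h = 0} := by
  let N : Matrix (Fin s) (Fin s) (ZMod q) := (a.1 : ZMod q) • M₁.map (Int.castRingHom (ZMod q)) +
    (a.2 : ZMod q) • M₂.map (Int.castRingHom (ZMod q))
  have hN : N.IsSymm := ((hM₁.map _).smul _).add ((hM₂.map _).smul _)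
  have h2N : 2 • N = (a.1 : ZMod q) • (2 • M₁).map (Int.castRingHom (ZMod q)) +
      (a.2 : ZMod q) • (2 • M₂).map (Int.castRingHom (ZMod q)) := by
    ext i j
    simp only [N, Matrix.smul_apply, Matrix.add_apply, Matrix.map_apply, smul_eq_mul, two_smul,
      map_add]
    ring
  rw [← h2N]
  refine le_of_eq_of_le ?_ (normSq_sum_quadratic_le hN fun i => (u i : ZMod q))
  rw [← sum_piFinset_range_natCast]
  congr 2
  refine Finset.sum_congr rfl fun b _ => ?_
  rw [eqc_eq_stdAddChar]
  congr 1
  push_cast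
  rw [intCast_quadEval, intCast_quadEval]
  simp only [N, add_mulVec, smul_mulVec, dotProduct_add, dotProduct_smul, smul_eq_mul,
    Int.cast_natCast]
  rfl

theorem isCoprime_natCast_of_gcd_eq_one {q x y : ℕ} (h : Nat.gcd (Nat.gcd x y) q = 1) :
    IsCoprime (x : ZMod q) (y : ZMod q) := by
  have h1 : IsCoprime ((Nat.gcd x y : ℕ) : ZMod q) (q : ZMod q) := by
    have := (Nat.isCoprime_iff_coprime.2 h).map (Int.castRingHom (ZMod q))
    simpa using this
  rw [ZMod.natCast_self, isCoprime_zero_right] at h1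
  obtain ⟨c, hc⟩ := h1.exists_left_inv
  have h2 := congrArg (Int.cast : ℤ → ZMod q) (Nat.gcd_eq_gcd_ab x y)
  push_cast at h2
  refine ⟨c * Nat.gcdA x y, c * Nat.gcdB x y, ?_⟩
  rw [← hc, h2]
  ring

theorem sum_card_ker_le_card_primitiveKernel {s q : ℕ} [NeZero q] (A B : Matrix (Fin s) (Fin s) ℤ) :
    ∑ a ∈ residues q, #{h : Fin s → ZMod q |
        ((a.1 : ZMod q) • A.map (Int.castRingHom (ZMod q)) +
          (a.2 : ZMod q) • B.map (Int.castRingHom (ZMod q))) *ᵥ h = 0} ≤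
      (primitiveKernel A B (ZMod q)).card := by
  rw [← Finset.card_sigma]
  refine Finset.card_le_card_of_injOn
    (fun z => (((z.1.1 : ZMod q), (z.1.2 : ZMod q)), z.2)) (fun z hz => ?_) ?_
  · obtain ⟨h1, h2⟩ := Finset.mem_sigma.1 hz
    exact mem_primitiveKernel.2
      ⟨isCoprime_natCast_of_gcd_eq_one (Finset.mem_filter.1 h1).2, (Finset.mem_filter.1 h2).2⟩
  · have hinj : ∀ x y : ℕ, x < q → y < q → (x : ZMod q) = y → x = y := fun x y hx hy h => by
      rw [← ZMod.val_cast_of_lt hx, h, ZMod.val_cast_of_lt hy]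
    rintro ⟨⟨x, y⟩, v⟩ hz ⟨⟨x', y'⟩, v'⟩ hz' h
    have h1 := (Finset.mem_sigma.1 hz).1
    have h2 := (Finset.mem_sigma.1 hz').1
    simp only [residues, Finset.mem_filter, Finset.mem_product, Finset.mem_range] at h1 h2
    simp only [Prod.mk.injEq] at h
    obtain ⟨⟨hx, hy⟩, rfl⟩ := h
    obtain rfl := hinj _ _ h1.1.1 h2.1.1 hx
    obtain rfl := hinj _ _ h1.1.2 h2.1.2 hy
    rfl

theorem card_residues_le (q : ℕ) : (residues q).card ≤ q ^ 2 := by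
  refine (Finset.card_filter_le _ _).trans ?_
  simp [sq]

theorem norm_Dq_sq_le {s q : ℕ} [NeZero q] {M₁ M₂ : Matrix (Fin s) (Fin s) ℤ}
    (hM₁ : M₁.IsSymm) (hM₂ : M₂.IsSymm) (u : Fin s → ℤ) :
    ‖Dq s M₁ M₂ q u‖ ^ 2 ≤
      (q : ℝ) ^ (s + 2) * (primitiveKernel (2 • M₁) (2 • M₂) (ZMod q)).card := by
  calc ‖Dq s M₁ M₂ q u‖ ^ 2
      ≤ (∑ a ∈ residues q, ‖∑ b ∈ Fintype.piFinset (fun _ : Fin s => Finset.range q),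
          eqc q ((a.1 : ℤ) * quadEval M₁ (fun i => (b i : ℤ)) +
            (a.2 : ℤ) * quadEval M₂ (fun i => (b i : ℤ)) + ∑ i, (b i : ℤ) * u i)‖) ^ 2 := by
        gcongr
        exact norm_sum_le _ _
    _ ≤ (residues q).card * ∑ a ∈ residues q,
          ‖∑ b ∈ Fintype.piFinset (fun _ : Fin s => Finset.range q),
          eqc q ((a.1 : ℤ) * quadEval M₁ (fun i => (b i : ℤ)) +
            (a.2 : ℤ) * quadEval M₂ (fun i => (b i : ℤ)) + ∑ i, (b i : ℤ) * u i)‖ ^ 2 :=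
        sq_sum_le_card_mul_sum_sq
    _ ≤ (q : ℝ) ^ 2 * ((q : ℝ) ^ s * (primitiveKernel (2 • M₁) (2 • M₂) (ZMod q)).card) := by
        gcongr
        · exact_mod_cast card_residues_le q
        · refine (Finset.sum_le_sum fun a _ => normSq_sum_eqc_le hM₁ hM₂ a u).trans ?_
          rw [← Finset.mul_sum]
          gcongr
          rw [← Nat.cast_sum]
          exact Nat.cast_le.2 (sum_card_ker_le_card_primitiveKernel (2 • M₁) (2 • M₂))
    _ = _ := by ring

/-- `D_q(u) ≪_ε q^{s/2+2+ε}` (Lemma 6.4). -/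
theorem statement16 (s : ℕ) (M₁ M₂ : Matrix (Fin s) (Fin s) ℤ)
    (hM₁ : M₁.IsSymm) (hM₂ : M₂.IsSymm) (hns : NonsingularPair s M₁ M₂) :
    ∀ ε : ℝ, 0 < ε → ∃ C : ℝ, 0 < C ∧ ∀ q : ℕ, 1 ≤ q → ∀ u : Fin s → ℤ,
      ‖Dq s M₁ M₂ q u‖ ≤ C * (q : ℝ) ^ ((s : ℝ) / 2 + 2 + ε) := by
  intro ε hε
  obtain ⟨C, hC, hbound⟩ := exists_card_primitiveKernel_le_rpow hM₁ hM₂ hns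
    (show 0 < 2 * ε by linarith)
  refine ⟨√C, Real.sqrt_pos.2 hC, fun q hq u => ?_⟩
  have : NeZero q := ⟨by omega⟩
  have hq0 : (0 : ℝ) < q := by exact_mod_cast hq
  refine le_of_sq_le_sq ?_ (by positivity)
  calc ‖Dq s M₁ M₂ q u‖ ^ 2
      ≤ (q : ℝ) ^ (s + 2) * (primitiveKernel (2 • M₁) (2 • M₂) (ZMod q)).card :=
        norm_Dq_sq_le hM₁ hM₂ u
    _ ≤ (q : ℝ) ^ (s + 2) * (C * (q : ℝ) ^ (2 + 2 * ε)) := by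
        gcongr
        exact hbound q
    _ = (√C * (q : ℝ) ^ ((s : ℝ) / 2 + 2 + ε)) ^ 2 := by
        rw [mul_pow, Real.sq_sqrt hC.le, ← Real.rpow_natCast, ← Real.rpow_natCast,
          ← Real.rpow_mul hq0.le, mul_left_comm, ← Real.rpow_add hq0]
        congr 2
        push_cast
        ring
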